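/- Fix real numbers β and γ. If the real number r is realizable for the parameters β and γ, and r ≠ −β, then (1 + γr)/(β + r) is also realizable. -/

import Mathlib

open scoped BigOperators

/-- A finite undirected multigraph (self-loops and parallel edges permitted),
with vertices `Fin n` and edges given as a multiset of (ordered representatives of)
unordered pairs of vertices.  Since the edge weight below is symmetric, the
orientation of each pair is immaterial. -/
structure MultiGraph where
  n : ℕ
  edges : Multiset (Fin n × Fin n)

/-- The edge interaction: `A₀₀ = β`, `A₀₁ = A₁₀ = 1`, `A₁₁ = γ`
(spin `false` = 0, spin `true` = 1). -/
def edgeW (β γ : ℝ) (i j : Bool) : ℝ :=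
  if i = j then (if i then γ else β) else 1

/-- `[Z_{G,v}]_i` : the partition function (no external fields) restricted to
spin configurations with `σ v = i`. -/
def Zvert (β γ : ℝ) (G : MultiGraph) (v : Fin G.n) (i : Bool) : ℝ :=
  ∑ σ : Fin G.n → Bool,
    if σ v = i then (G.edges.map fun e => edgeW β γ (σ e.1) (σ e.2)).prod else 0

/-- A real number `r` is realizable for the parameters `β, γ` if some graph `G`
and vertex `v` satisfy `[Z_{G,v}]₀ ≠ 0` and `[Z_{G,v}]₁ / [Z_{G,v}]₀ = r`. -/
def Realizable (β γ r : ℝ) : Prop :=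
  ∃ (G : MultiGraph) (v : Fin G.n),
    Zvert β γ G v false ≠ 0 ∧ Zvert β γ G v true / Zvert β γ G v false = r

/-!
Attach a new vertex to `v` by a single edge. Summing over the spin of `v`, the partition vector of
the new graph at the new vertex is the matrix `A` applied to the partition vector `(Z₀, Z₁)` of the
old graph at `v`, that is, `(β Z₀ + Z₁, Z₀ + γ Z₁)`. Its ratio is `(1 + γ r) / (β + r)` for
`r = Z₁ / Z₀`, and its first entry `Z₀ (β + r)` is nonzero exactly when `r ≠ -β`.
-/

namespace MultiGraph

/-- The weight of a spin configuration `σ` on `G`: the product of its edge interactions, that is,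
the summand of the partition function. -/
def weight (β γ : ℝ) (G : MultiGraph) (σ : Fin G.n → Bool) : ℝ :=
  (G.edges.map fun e => edgeW β γ (σ e.1) (σ e.2)).prod

/-- The graph obtained from `G` by joining a new vertex to `v` by a single edge. The new vertex is
numbered `0`, and each old vertex `u` becomes `u.succ`. -/
def addPendant (G : MultiGraph) (v : Fin G.n) : MultiGraph where
  n := G.n + 1
  edges := (0, v.succ) ::ₘ G.edges.map (Prod.map Fin.succ Fin.succ)

/-- The new vertex of `G.addPendant v`, at which the new graph realizes its ratio. -/
def pendantVertex (G : MultiGraph) (v : Fin G.n) : Fin (G.addPendant v).n :=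
  (0 : Fin (G.n + 1))

variable (β γ : ℝ) (G : MultiGraph) (v : Fin G.n)

theorem sum_mul_weight (f : Bool → ℝ) :
    ∑ σ, f (σ v) * G.weight β γ σ = ∑ j, f j * Zvert β γ G v j := by
  simp only [Zvert, Finset.mul_sum, mul_ite, mul_zero]
  rw [Finset.sum_comm]
  simp only [Finset.sum_ite_eq, Finset.mem_univ, if_true, weight]

theorem weight_addPendant_cons (i : Bool) (σ : Fin G.n → Bool) :
    (G.addPendant v).weight β γ (Fin.cons i σ : Fin (G.n + 1) → Bool) =
      edgeW β γ i (σ v) * G.weight β γ σ := by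
  simp [weight, addPendant]

theorem Zvert_pendantVertex_eq_sum_weight (i : Bool) :
    Zvert β γ (G.addPendant v) (G.pendantVertex v) i =
      ∑ σ : Fin G.n → Bool,
        (G.addPendant v).weight β γ (Fin.cons i σ : Fin (G.n + 1) → Bool) := by
  calc
    Zvert β γ (G.addPendant v) (G.pendantVertex v) i
      = ∑ τ : Fin (G.n + 1) → Bool, if τ 0 = i then (G.addPendant v).weight β γ τ else 0 := rfl
    _ = ∑ j, ∑ σ : Fin G.n → Bool, if j = i then
          (G.addPendant v).weight β γ (Fin.cons j σ : Fin (G.n + 1) → Bool) else 0 := by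
        rw [← (Fin.consEquiv fun _ => Bool).sum_comp, Fintype.sum_prod_type]
        rfl
    _ = _ := by
        rw [Finset.sum_comm]
        simp only [Finset.sum_ite_eq', Finset.mem_univ, if_true]

theorem Zvert_pendantVertex (i : Bool) :
    Zvert β γ (G.addPendant v) (G.pendantVertex v) i = ∑ j, edgeW β γ i j * Zvert β γ G v j := by
  simp only [Zvert_pendantVertex_eq_sum_weight, weight_addPendant_cons, sum_mul_weight]

theorem Zvert_pendantVertex_false :
    Zvert β γ (G.addPendant v) (G.pendantVertex v) false =
      β * Zvert β γ G v false + Zvert β γ G v true := by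
  simp [Zvert_pendantVertex, edgeW, add_comm]

theorem Zvert_pendantVertex_true :
    Zvert β γ (G.addPendant v) (G.pendantVertex v) true =
      Zvert β γ G v false + γ * Zvert β γ G v true := by
  simp [Zvert_pendantVertex, edgeW, add_comm]

end MultiGraph

/-- If `r` is realizable and `r ≠ -β` then `(1 + γr)/(β + r)` is also realizable. -/
theorem stmt11 (β γ r : ℝ) (h : Realizable β γ r) (hr : r ≠ -β) :
    Realizable β γ ((1 + γ * r) / (β + r)) := by
  obtain ⟨G, v, h0, rfl⟩ := h
  have h_false : β + Zvert β γ G v true / Zvert β γ G v false =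
      Zvert β γ (G.addPendant v) (G.pendantVertex v) false / Zvert β γ G v false := by
    rw [MultiGraph.Zvert_pendantVertex_false, add_div, mul_div_cancel_right₀ _ h0]
  have h_true : 1 + γ * (Zvert β γ G v true / Zvert β γ G v false) =
      Zvert β γ (G.addPendant v) (G.pendantVertex v) true / Zvert β γ G v false := by
    rw [MultiGraph.Zvert_pendantVertex_true, add_div, div_self h0, mul_div_assoc]
  refine ⟨G.addPendant v, G.pendantVertex v, fun h_zero => hr ?_, ?_⟩
  · rw [h_zero, zero_div] at h_false
    exact eq_neg_of_add_eq_zero_right h_false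
  · rw [h_true, h_false, div_div_div_cancel_right₀ h0]
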